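/- For all real numbers a ≥ 1 and b ∈ (0, 1), the function f : (0, 1] → ℝ defined by f(c) = (a^c − b^c)/c is convex on the interval (0, 1]. -/

import Mathlib

/-!
For `c > 0` we have `(a ^ c - b ^ c) / c = ∫ s in b..a, s ^ (c - 1)`. For each fixed `s > 0` the
integrand is an exponential function of `c`, hence convex in `c`, and for `0 ≤ b ≤ a` an integral
over `(b, a]` of functions that are convex in a parameter is again convex in that parameter.
-/

open MeasureTheory Set

theorem convexOn_intervalIntegral {E F : Type*} [AddCommMonoid E] [Module ℝ E]
    [NormedAddCommGroup F] [NormedSpace ℝ F] [PartialOrder F] [IsOrderedAddMonoid F]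
    [IsOrderedModule ℝ F] [ClosedIciTopology F] {S : Set E} {f : ℝ → E → F} {μ : Measure ℝ}
    {a b : ℝ} (hab : a ≤ b) (hS : Convex ℝ S)
    (hf_conv : ∀ᵐ s ∂μ.restrict (Ioc a b), ConvexOn ℝ S (f s))
    (hf_int : ∀ x ∈ S, IntervalIntegrable (f · x) μ a b) :
    ConvexOn ℝ S (fun x => ∫ s in a..b, f s x ∂μ) := by
  simp only [intervalIntegral.integral_of_le hab]
  exact integral_convexOn_of_integrand_ae hS hf_conv fun x hx => (hf_int x hx).1

theorem convexOn_rpow_left_sub_const {s : ℝ} (hs : 0 < s) (r : ℝ) :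
    ConvexOn ℝ univ (fun c : ℝ => s ^ (c - r)) :=
  (convexOn_rpow_left hs).translate_left (-r)

theorem integral_rpow_sub_one (a b : ℝ) {c : ℝ} (hc : 0 < c) :
    ∫ s in b..a, s ^ (c - 1) = (a ^ c - b ^ c) / c := by
  rw [integral_rpow (.inl (by linarith)), sub_add_cancel]

theorem stmt19_general {a b : ℝ} (hb : 0 ≤ b) (hba : b ≤ a) :
    ConvexOn ℝ (Ioi 0) (fun c : ℝ => (a ^ c - b ^ c) / c) := by
  have hconv : ConvexOn ℝ (Ioi 0) (fun c : ℝ => ∫ s in b..a, s ^ (c - 1)) := by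
    refine convexOn_intervalIntegral hba (convex_Ioi 0)
      (ae_restrict_of_forall_mem measurableSet_Ioc fun s hs => ?_) fun c hc => ?_
    · have hs_pos : 0 < s := hb.trans_lt hs.1
      exact (convexOn_rpow_left_sub_const hs_pos 1).subset (subset_univ _) (convex_Ioi 0)
    · have hc_pos : 0 < c := hc
      exact intervalIntegral.intervalIntegrable_rpow' (by linarith)
  exact hconv.congr fun c hc => integral_rpow_sub_one a b hc

/-- For `a ≥ 1` and `b ∈ (0, 1)`, the function `c ↦ (a^c − b^c)/c` is convex on `(0, 1]`. -/
theorem stmt19 (a b : ℝ) (ha : 1 ≤ a) (hb0 : 0 < b) (hb1 : b < 1) :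
    ConvexOn ℝ (Set.Ioc (0 : ℝ) 1) (fun c : ℝ => (a ^ c - b ^ c) / c) :=
  (stmt19_general hb0.le (hb1.le.trans ha)).subset Ioc_subset_Ioi_self (convex_Ioc 0 1)
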